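/- Let α_1,…,α_n, β_1,…,β_n ∈ ℂ with Re(β_i − α_i) > 0 for each i, and let H = h_{α_1,β_1} ∗ ⋯ ∗ h_{α_n,β_n}. Then on each open interval (−n/2 + k, −n/2 + k + 1), k = 0,…,n−1, the (smooth) function H satisfies the hypergeometric differential equation in the angular variable: (D_φ − α_1)∘⋯∘(D_φ − α_n) H (φ) = (−1)^n e^{2πiφ} · (D_φ − β_1)∘⋯∘(D_φ − β_n) H (φ), where D_φ = (2πi)^{−1} d/dφ. -/

import Mathlib

open Complex Filter Set Finset MeasureTheory
open scoped Real

noncomputable section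

/-- The function `h_{α,β}(φ) = e^{2πiαφ}(1 + e^{2πiφ})^{β-α}/Γ(β-α+1)` on `(-1/2, 1/2)`,
extended by `0` (principal branch power). -/
def hfun (α β : ℂ) : ℝ → ℂ := fun φ =>
  if φ ∈ Set.Ioo (-(1 : ℝ) / 2) ((1 : ℝ) / 2) then
    Complex.exp (2 * (π : ℂ) * Complex.I * α * (φ : ℂ)) *
      (1 + Complex.exp (2 * (π : ℂ) * Complex.I * (φ : ℂ))) ^ (β - α) /
        Complex.Gamma (β - α + 1)
  else 0

/-- Convolution over `ℝ`: `(f ∗ g)(x) = ∫ f(x - y) g(y) dy`. -/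
def conv (f g : ℝ → ℂ) : ℝ → ℂ := fun x => ∫ y : ℝ, f (x - y) * g y

/-- The iterated convolution `f₁ ∗ (f₂ ∗ (⋯ ∗ fₙ))` of a list of functions. -/
def convList : List (ℝ → ℂ) → (ℝ → ℂ)
  | [] => fun _ => 0
  | [f] => f
  | f :: g :: rest => conv f (convList (g :: rest))

/-- The first-order operator `D_φ - c : f ↦ (2πi)⁻¹ f' - c·f` in the angular variable. -/
def angOp (c : ℂ) (f : ℝ → ℂ) : ℝ → ℂ :=
  fun φ => (2 * (π : ℂ) * Complex.I)⁻¹ * deriv f φ - c * f φ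

/-- The composition `(D_φ - c₁)∘⋯∘(D_φ - cₙ)`. -/
def angOpChain (cs : List ℂ) (f : ℝ → ℂ) : ℝ → ℂ := cs.foldr angOp f

/-!
Each factor satisfies a first-order equation: with `q = e^{2πiφ}`,
`(D_φ - α) h_{α,β} = h_{α+1,β} = q h_{α,β-1} = -q (D_φ - β) h_{α,β}`. As `q` is a character of `ℝ`,
multiplication by it distributes over convolution, and letting each operator act on its own factor
multiplies these equations to the asserted one. The difficulty is regularity: `h_{α+1,β}` is only
integrable, and the product equation a priori holds only almost everywhere.

So apply `n - 1` of the operators, one per factor. This gives continuous functions `A` and `B`, with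
weak derivatives `u = D_φ A` and `w = D_φ B`, such that `u - α A = (-1)^n q (w - β B)` almost
everywhere. Telescoping the difference of the two chains, every term contains two factors `h_{α,β}`
on which no operator acts, one more than `A` and `B` have. So `A - B` is `C¹`, that is, `u - w` is
almost everywhere equal to a continuous function. Hence so is `w - β B`, as long as `(-1)^n q ≠ 1`,
and there `A` and `B` are differentiable and the equation holds pointwise.
-/

open scoped Topology

lemma conv_comm (f g : ℝ → ℂ) : conv f g = conv g f := by
  funext x
  simpa [conv, mul_comm] using
    (integral_sub_left_eq_self (fun y => f (x - y) * g y) volume x).symm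

lemma conv_apply (f g : ℝ → ℂ) (x : ℝ) : conv f g x = ∫ t, f t * g (x - t) := by
  rw [conv_comm]
  simp [conv, mul_comm]

lemma conv_eq_convolution (f g : ℝ → ℂ) :
    conv f g = convolution f g (ContinuousLinearMap.mul ℝ ℂ) volume :=
  funext (conv_apply f g)

lemma integrable_conv {f g : ℝ → ℂ} (hf : Integrable f) (hg : Integrable g) :
    Integrable (conv f g) := by
  rw [conv_eq_convolution]
  exact hf.integrable_convolution _ hg

lemma conv_congr_ae {f g k : ℝ → ℂ} (h : g =ᵐ[volume] k) : conv f g = conv f k := by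
  funext x
  exact integral_congr_ae (h.mono fun y hy => by simp only [hy])

lemma conv_sub_const_mul_ae {f g k : ℝ → ℂ} (hf : Integrable f) (hg : Integrable g)
    (hk : Integrable k) (c : ℂ) :
    conv f (fun x => g x - c * k x) =ᵐ[volume] fun x => conv f g x - c * conv f k x := by
  filter_upwards [hf.ae_convolution_exists (ContinuousLinearMap.mul ℝ ℂ) hg,
    hf.ae_convolution_exists (ContinuousLinearMap.mul ℝ ℂ) hk] with x hgx hkx
  have hgx' : Integrable fun t => f t * g (x - t) := hgx
  have hkx' : Integrable fun t => f t * k (x - t) := hkx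
  simp only [conv_apply, mul_sub, mul_left_comm (f _) c]
  rw [integral_sub hgx' (hkx'.const_mul c), integral_const_mul]

lemma intervalIntegral_conv {f g : ℝ → ℂ} (hf : Integrable f) (hg : Integrable g) (a b : ℝ) :
    ∫ x in a..b, conv f g x = ∫ t, f t * ∫ x in a..b, g (x - t) := by
  simp_rw [conv_apply]
  rw [intervalIntegral_integral_swap]
  · simp
  · have h := (hf.convolution_integrand (ContinuousLinearMap.mul ℝ ℂ) hg).restrict
      (s := uIoc a b ×ˢ univ)
    rwa [← Measure.prod_restrict, Measure.restrict_univ] at h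

lemma conv_mul_of_map_add_eq_mul {χ : ℝ → ℂ} (hχ : ∀ x y, χ (x + y) = χ x * χ y) (a b : ℂ)
    (f g : ℝ → ℂ) (x : ℝ) :
    conv (fun t => a * χ t * f t) (fun t => b * χ t * g t) x = a * b * χ x * conv f g x := by
  unfold conv
  rw [← integral_const_mul]
  refine integral_congr_ae (.of_forall fun y => ?_)
  have hxy : χ x = χ (x - y) * χ y := by rw [← hχ, sub_add_cancel]
  simp only [hxy]
  ring

/-- Integrable, bounded and continuous functions. Convolution with an integrable function preserves
this class, and such convolutions are defined at every point. -/
structure IsTame (f : ℝ → ℂ) : Prop where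
  integrable : Integrable f
  continuous : Continuous f
  bounded : ∃ C, ∀ x, ‖f x‖ ≤ C

namespace IsTame

lemma add {f g : ℝ → ℂ} (hf : IsTame f) (hg : IsTame g) : IsTame fun x => f x + g x := by
  obtain ⟨C, hC⟩ := hf.bounded
  obtain ⟨D, hD⟩ := hg.bounded
  exact ⟨hf.integrable.add hg.integrable, hf.continuous.add hg.continuous, C + D,
    fun x => norm_add_le_of_le (hC x) (hD x)⟩

lemma const_mul {f : ℝ → ℂ} (hf : IsTame f) (c : ℂ) : IsTame fun x => c * f x := by
  obtain ⟨C, hC⟩ := hf.bounded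
  refine ⟨hf.integrable.const_mul c, continuous_const.mul hf.continuous, ‖c‖ * C, fun x => ?_⟩
  rw [norm_mul]
  gcongr
  exact hC x

lemma integrable_mul_comp_sub {f g : ℝ → ℂ} (hg : IsTame g) (hf : Integrable f) (x : ℝ) :
    Integrable fun t => f t * g (x - t) := by
  obtain ⟨C, hC⟩ := hg.bounded
  exact hf.mul_bdd (c := C) (hg.continuous.comp (by fun_prop)).aestronglyMeasurable
    (.of_forall fun _ => hC _)

lemma conv_left {f g : ℝ → ℂ} (hg : IsTame g) (hf : Integrable f) : IsTame (conv f g) := by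
  obtain ⟨C, hC⟩ := hg.bounded
  refine ⟨integrable_conv hf hg.integrable, ?_, C * ∫ t, ‖f t‖, fun x => ?_⟩
  · rw [conv_eq_convolution]
    exact BddAbove.continuous_convolution_right_of_integrable _
      ⟨C, forall_mem_range.2 hC⟩ hf hg.continuous
  · rw [conv_apply, ← integral_const_mul]
    refine norm_integral_le_of_norm_le (hf.norm.const_mul C) (.of_forall fun t => ?_)
    rw [norm_mul, mul_comm]
    gcongr
    exact hC _

end IsTame

lemma conv_left_comm {f g k : ℝ → ℂ} (hf : Integrable f) (hg : Integrable g) (hk : IsTame k) :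
    conv f (conv g k) = conv g (conv f k) := by
  funext x
  obtain ⟨C, hC⟩ := hk.bounded
  have hInt : Integrable (fun p : ℝ × ℝ => f p.1 * g p.2 * k (x - p.1 - p.2))
      (volume.prod volume) :=
    (hf.mul_prod hg).mul_bdd (c := C) (hk.continuous.comp (by fun_prop)).aestronglyMeasurable
      (.of_forall fun _ => hC _)
  calc conv f (conv g k) x
      = ∫ t, ∫ s, f t * g s * k (x - t - s) := by
        simp only [conv_apply, ← integral_const_mul, mul_assoc]
    _ = ∫ s, ∫ t, f t * g s * k (x - t - s) := integral_integral_swap hInt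
    _ = conv g (conv f k) x := by
        simp only [conv_apply, ← integral_const_mul, sub_right_comm x, mul_left_comm, mul_assoc]

lemma conv_sub_const_mul_left {f g k : ℝ → ℂ} (hf : Integrable f) (hg : Integrable g)
    (hk : IsTame k) (c : ℂ) (x : ℝ) :
    conv (fun t => f t - c * g t) k x = conv f k x - c * conv g k x := by
  simp only [conv_apply]
  rw [← integral_const_mul, ← integral_sub (hk.integrable_mul_comp_sub hf x)
    ((hk.integrable_mul_comp_sub hg x).const_mul c)]
  congr! 2 with t
  ring

lemma conv_sub_right {f g k : ℝ → ℂ} (hf : Integrable f) (hg : IsTame g) (hk : IsTame k)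
    (x : ℝ) : conv f (fun t => g t - k t) x = conv f g x - conv f k x := by
  simp only [conv_apply, mul_sub]
  exact integral_sub (hg.integrable_mul_comp_sub hf x) (hk.integrable_mul_comp_sub hf x)

/-- `v` is an integrable version of `D_φ F`, in the sense that `F` is a primitive of `2πi v`. -/
structure HasWeakAngDeriv (F v : ℝ → ℂ) : Prop where
  integrable : Integrable v
  sub_eq : ∀ a b : ℝ, F b - F a = 2 * π * I * ∫ x in a..b, v x

namespace HasWeakAngDeriv

variable {F G v w : ℝ → ℂ}

lemma eq_add (hF : HasWeakAngDeriv F v) (a : ℝ) :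
    F = fun x => F a + 2 * π * I * ∫ t in a..x, v t := by
  funext x
  rw [← hF.sub_eq a x, add_sub_cancel]

lemma continuous (hF : HasWeakAngDeriv F v) : Continuous F := by
  rw [hF.eq_add 0]
  exact continuous_const.add (continuous_const.mul
    (intervalIntegral.continuous_primitive (fun _ _ => hF.integrable.intervalIntegrable) 0))

lemma ae_hasDerivAt (hF : HasWeakAngDeriv F v) : ∀ᵐ x, HasDerivAt F (2 * π * I * v x) x := by
  have hv := LocallyIntegrable.ae_hasDerivAt_integral hF.integrable.locallyIntegrable
  filter_upwards [hv] with x hx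
  rw [hF.eq_add 0]
  exact ((hx 0).const_mul _).const_add _

lemma ae_unique (hv : HasWeakAngDeriv F v) (hw : HasWeakAngDeriv F w) : v =ᵐ[volume] w := by
  filter_upwards [hv.ae_hasDerivAt, hw.ae_hasDerivAt] with x hvx hwx
  exact mul_left_cancel₀ two_pi_I_ne_zero (hvx.unique hwx)

lemma hasDerivAt_of_tendsto_ae {x : ℝ} {ℓ : ℂ} (hF : HasWeakAngDeriv F v)
    (hv : Tendsto v (𝓝 x ⊓ ae volume) (𝓝 ℓ)) : HasDerivAt F (2 * π * I * ℓ) x := by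
  rw [hF.eq_add x]
  exact ((intervalIntegral.integral_hasDerivAt_of_tendsto_ae_right (by simp)
    (hF.integrable.aestronglyMeasurable.stronglyMeasurableAtFilter) hv).const_mul _).const_add _

lemma angOp_eq_of_tendsto_ae {c : ℂ} {x : ℝ} {ℓ : ℂ} (hF : HasWeakAngDeriv F v)
    (hv : Tendsto (fun t => v t - c * F t) (𝓝 x ⊓ ae volume) (𝓝 ℓ)) : angOp c F x = ℓ := by
  have hcF : Tendsto (fun t => c * F t) (𝓝 x ⊓ ae volume) (𝓝 (c * F x)) :=
    (continuous_const.mul hF.continuous).continuousAt.mono_left inf_le_left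
  have hderiv : HasDerivAt F (2 * π * I * (ℓ + c * F x)) x :=
    hF.hasDerivAt_of_tendsto_ae (by simpa using hv.add hcF)
  rw [angOp, hderiv.deriv, inv_mul_cancel_left₀ two_pi_I_ne_zero, add_sub_cancel_right]

lemma add (hF : HasWeakAngDeriv F v) (hG : HasWeakAngDeriv G w) :
    HasWeakAngDeriv (fun x => F x + G x) fun x => v x + w x := by
  refine ⟨hF.integrable.add hG.integrable, fun a b => ?_⟩
  rw [intervalIntegral.integral_add hF.integrable.intervalIntegrable
    hG.integrable.intervalIntegrable, mul_add, ← hF.sub_eq, ← hG.sub_eq]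
  ring

lemma const_mul (hF : HasWeakAngDeriv F v) (c : ℂ) :
    HasWeakAngDeriv (fun x => c * F x) fun x => c * v x := by
  refine ⟨hF.integrable.const_mul c, fun a b => ?_⟩
  rw [intervalIntegral.integral_const_mul, mul_left_comm, ← hF.sub_eq]
  ring

lemma sub (hF : HasWeakAngDeriv F v) (hG : HasWeakAngDeriv G w) :
    HasWeakAngDeriv (fun x => F x - G x) fun x => v x - w x := by
  simpa [sub_eq_add_neg] using hF.add (hG.const_mul (-1))

lemma conv_left {f : ℝ → ℂ} (hv : HasWeakAngDeriv F v) (hF : IsTame F) (hf : Integrable f) :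
    HasWeakAngDeriv (conv f F) (conv f v) := by
  refine ⟨integrable_conv hf hv.integrable, fun a b => ?_⟩
  rw [intervalIntegral_conv hf hv.integrable, ← integral_const_mul, conv_apply, conv_apply,
    ← integral_sub (hF.integrable_mul_comp_sub hf b) (hF.integrable_mul_comp_sub hf a)]
  refine integral_congr_ae (.of_forall fun t => ?_)
  simp only [intervalIntegral.integral_comp_sub_right, ← mul_sub, hv.sub_eq (a - t) (b - t)]
  ring

lemma conv_right {f : ℝ → ℂ} (hv : HasWeakAngDeriv F v) (hF : IsTame F) (hf : Integrable f) :
    HasWeakAngDeriv (conv F f) (conv v f) := by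
  rw [conv_comm F, conv_comm v]
  exact hv.conv_left hF hf

lemma angOp_conv {f : ℝ → ℂ} (hv : HasWeakAngDeriv F v) (hF : IsTame F) (hf : IsTame f) (c : ℂ) :
    angOp c (conv F f) = conv (fun x => v x - c * F x) f := by
  funext x
  have hcont : Continuous (conv (fun x => v x - c * F x) f) :=
    (hf.conv_left (hv.integrable.sub (hF.integrable.const_mul c))).continuous
  refine (hv.conv_right hF hf.integrable).angOp_eq_of_tendsto_ae ?_
  simp only [← conv_sub_const_mul_left hv.integrable hF.integrable hf]
  exact hcont.continuousAt.mono_left inf_le_left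

end HasWeakAngDeriv

lemma angOp_eq_mul_angOp {A B u w g q : ℝ → ℂ} {a b : ℂ} {x : ℝ}
    (hA : HasWeakAngDeriv A u) (hB : HasWeakAngDeriv B w)
    (hAB : HasWeakAngDeriv (fun t => A t - B t) g) (hg : ContinuousAt g x)
    (hq : ContinuousAt q x) (hqx : q x ≠ 1)
    (huw : ∀ᵐ t, u t - a * A t = q t * (w t - b * B t)) :
    angOp a A x = q x * angOp b B x := by
  -- Inserting `u - w = g` into `huw` and solving for `w - b B` gives `r`, which is continuous
  -- at `x`.
  set r : ℝ → ℂ := fun t => (g t - a * A t + b * B t) / (q t - 1) with hr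
  have hrx : ContinuousAt r x := by
    have := hA.continuous.continuousAt (x := x)
    have := hB.continuous.continuousAt (x := x)
    exact ContinuousAt.div (by fun_prop) (by fun_prop) (sub_ne_zero.2 hqx)
  have hwr : ∀ᶠ t in 𝓝 x ⊓ ae volume, r t = w t - b * B t := by
    filter_upwards [(hq.eventually_ne hqx).filter_mono inf_le_left,
      huw.filter_mono inf_le_right, ((hA.sub hB).ae_unique hAB).filter_mono inf_le_right]
      with t hqt huwt hgt
    rw [hr, div_eq_iff (sub_ne_zero.2 hqt), ← hgt]
    linear_combination huwt
  have hur : ∀ᶠ t in 𝓝 x ⊓ ae volume, q t * r t = u t - a * A t := by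
    filter_upwards [hwr, huw.filter_mono inf_le_right] with t hwt huwt
    rw [hwt, huwt]
  rw [hA.angOp_eq_of_tendsto_ae (((hq.mul hrx).mono_left inf_le_left).congr' hur),
    hB.angOp_eq_of_tendsto_ae ((hrx.mono_left inf_le_left).congr' hwr), Pi.mul_apply]

section IteratedConvolution

variable {ι : Type*}

lemma angOpChain_cons (c : ℂ) (cs : List ℂ) (f : ℝ → ℂ) :
    angOpChain (c :: cs) f = angOp c (angOpChain cs f) := rfl

/-- The iterated convolution `f i₁ ∗ (f i₂ ∗ ⋯ (f iₘ ∗ F))` over a list of indices. Unlike in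
`convList`, the innermost factor is singled out and need not belong to the family. -/
def iterConv (f : ι → ℝ → ℂ) (L : List ι) (F : ℝ → ℂ) : ℝ → ℂ :=
  L.foldr (fun i => conv (f i)) F

@[simp] lemma iterConv_nil (f : ι → ℝ → ℂ) (F : ℝ → ℂ) : iterConv f [] F = F := rfl

@[simp] lemma iterConv_cons (f : ι → ℝ → ℂ) (i : ι) (L : List ι) (F : ℝ → ℂ) :
    iterConv f (i :: L) F = conv (f i) (iterConv f L F) := rfl

section Integrable

variable {f : ι → ℝ → ℂ} (hf : ∀ i, Integrable (f i)) (L : List ι)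
include hf

lemma integrable_iterConv {F : ℝ → ℂ} (hF : Integrable F) : Integrable (iterConv f L F) := by
  induction L with
  | nil => exact hF
  | cons i L ih => exact integrable_conv (hf i) ih

lemma IsTame.iterConv {F : ℝ → ℂ} (hF : IsTame F) : IsTame (iterConv f L F) := by
  induction L with
  | nil => exact hF
  | cons i L ih => exact ih.conv_left (hf i)

lemma conv_iterConv {g F : ℝ → ℂ} (hg : Integrable g) (hF : IsTame F) :
    conv g (iterConv f L F) = iterConv f L (conv g F) := by
  induction L with
  | nil => rfl
  | cons i L ih =>
    rw [iterConv_cons, iterConv_cons, ← ih, conv_left_comm hg (hf i) (hF.iterConv hf L)]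

lemma iterConv_sub_const_mul_ae {F G : ℝ → ℂ} (hF : Integrable F) (hG : Integrable G) (c : ℂ) :
    iterConv f L (fun x => F x - c * G x) =ᵐ[volume]
      fun x => iterConv f L F x - c * iterConv f L G x := by
  induction L with
  | nil => rfl
  | cons i L ih =>
    simp only [iterConv_cons, conv_congr_ae ih]
    exact conv_sub_const_mul_ae (hf i) (integrable_iterConv hf L hF)
      (integrable_iterConv hf L hG) c

lemma HasWeakAngDeriv.iterConv {F v : ℝ → ℂ} (hv : HasWeakAngDeriv F v) (hF : IsTame F) :
    HasWeakAngDeriv (iterConv f L F) (iterConv f L v) := by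
  induction L with
  | nil => exact hv
  | cons i L ih => exact ih.conv_left (hF.iterConv hf L) (hf i)

end Integrable

lemma iterConv_eq_mul_iterConv {χ : ℝ → ℂ} (hχ : ∀ x y, χ (x + y) = χ x * χ y) {ε : ℂ}
    {f g : ι → ℝ → ℂ} (hfg : ∀ i x, f i x = ε * χ x * g i x) {F G : ℝ → ℂ}
    (hFG : ∀ x, F x = ε * χ x * G x) (L : List ι) (x : ℝ) :
    iterConv f L F x = ε ^ (L.length + 1) * χ x * iterConv g L G x := by
  induction L generalizing x with
  | nil => simpa using hFG x
  | cons i L ih =>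
    rw [iterConv_cons, iterConv_cons, funext (hfg i), funext ih, conv_mul_of_map_add_eq_mul hχ,
      List.length_cons, pow_succ' ε (L.length + 1)]

lemma convList_map_cons {h : ι → ℝ → ℂ} (hh : ∀ i, IsTame (h i)) (i : ι) (L : List ι) :
    convList ((i :: L).map h) = iterConv h L (h i) := by
  have hInt i : Integrable (h i) := (hh i).integrable
  induction L generalizing i with
  | nil => rfl
  | cons j L ih =>
    calc convList ((i :: j :: L).map h)
        = conv (h i) (iterConv h L (h j)) := congrArg (conv (h i)) (ih j)
      _ = iterConv h L (conv (h i) (h j)) := conv_iterConv hInt L (hInt i) (hh j)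
      _ = iterConv h L (conv (h j) (h i)) := by rw [conv_comm]
      _ = iterConv h (j :: L) (h i) := (conv_iterConv hInt L (hInt j) (hh i)).symm

section FirstOrder

variable {h v : ι → ℝ → ℂ} (hh : ∀ i, IsTame (h i)) (hv : ∀ i, HasWeakAngDeriv (h i) (v i))
include hh hv

lemma integrable_sub_const_mul (c : ι → ℂ) (i : ι) :
    Integrable fun x => v i x - c i * h i x :=
  (hv i).integrable.sub ((hh i).integrable.const_mul (c i))

lemma angOpChain_iterConv (c : ι → ℂ) (L : List ι) {F : ℝ → ℂ} (hF : IsTame F) :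
    angOpChain (L.map c) (iterConv h L F) = iterConv (fun i x => v i x - c i * h i x) L F := by
  have hInt i : Integrable (h i) := (hh i).integrable
  have hw := integrable_sub_const_mul hh hv c
  induction L generalizing F with
  | nil => rfl
  | cons i L ih =>
    calc angOpChain ((i :: L).map c) (iterConv h (i :: L) F)
        = angOp (c i) (angOpChain (L.map c) (iterConv h L (conv (h i) F))) := by
          rw [← conv_iterConv hInt L (hInt i) hF, List.map_cons, angOpChain_cons, iterConv_cons]
      _ = angOp (c i) (conv (h i) (iterConv (fun i x => v i x - c i * h i x) L F)) := by
          rw [ih (hF.conv_left (hInt i)), ← conv_iterConv hw L (hInt i) hF]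
      _ = iterConv (fun i x => v i x - c i * h i x) (i :: L) F :=
          (hv i).angOp_conv (hh i) (hF.iterConv hw L) (c i)

/-- The difference gains one derivative because telescoping leaves in each term, besides `F`,
a factor `h i` to which no operator has been applied. -/
lemma exists_hasWeakAngDeriv_iterConv_sub (c d : ι → ℂ) (L : List ι) {F : ℝ → ℂ}
    (hF : IsTame F) :
    ∃ g, IsTame g ∧ HasWeakAngDeriv (fun x => iterConv (fun i x => v i x - c i * h i x) L F x -
      iterConv (fun i x => v i x - d i * h i x) L F x) g := by
  have hc := integrable_sub_const_mul hh hv c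
  have hd := integrable_sub_const_mul hh hv d
  induction L with
  | nil => exact ⟨fun _ => 0, ⟨integrable_zero _ _ _, continuous_const, 0, by simp⟩,
      integrable_zero _ _ _, by simp⟩
  | cons i L ih =>
    obtain ⟨g, hg, hABg⟩ := ih
    set A := iterConv (fun i x => v i x - c i * h i x) L F
    set B := iterConv (fun i x => v i x - d i * h i x) L F
    have hA : IsTame A := hF.iterConv hc L
    have hB : IsTame B := hF.iterConv hd L
    have hAB : IsTame fun x => A x - B x := by
      simpa [sub_eq_add_neg] using hA.add (hB.const_mul (-1))
    have htelescope : (fun x => conv (fun t => v i t - c i * h i t) A x -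
        conv (fun t => v i t - d i * h i t) B x) = fun x =>
          conv (fun t => v i t - c i * h i t) (fun t => A t - B t) x +
            (d i - c i) * conv (h i) B x := by
      funext x
      rw [conv_sub_right (hc i) hA hB,
        conv_sub_const_mul_left (hv i).integrable (hh i).integrable hB,
        conv_sub_const_mul_left (hv i).integrable (hh i).integrable hB]
      ring
    refine ⟨_, (hg.conv_left (hc i)).add ((hB.conv_left (hv i).integrable).const_mul (d i - c i)),
      ?_⟩
    simp only [iterConv_cons]
    rw [htelescope]
    exact (hABg.conv_left hAB (hc i)).add (((hv i).conv_right (hh i) hB.integrable).const_mul _)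

theorem angOpChain_convList_eq {α β : ι → ℂ} {χ : ℝ → ℂ}
    (hχ : ∀ x y, χ (x + y) = χ x * χ y) (hχc : Continuous χ) {ε : ℂ}
    (hrel : ∀ i x, v i x - α i * h i x = ε * χ x * (v i x - β i * h i x))
    {L : List ι} (hL : L ≠ []) {x : ℝ} (hx : ε ^ L.length * χ x ≠ 1) :
    angOpChain (L.map α) (convList (L.map h)) x =
      ε ^ L.length * χ x * angOpChain (L.map β) (convList (L.map h)) x := by
  obtain ⟨i, L, rfl⟩ := List.exists_cons_of_ne_nil hL
  have hα := integrable_sub_const_mul hh hv α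
  have hβ := integrable_sub_const_mul hh hv β
  obtain ⟨g, hg, hABg⟩ := exists_hasWeakAngDeriv_iterConv_sub hh hv α β L (hh i)
  rw [convList_map_cons hh]
  simp only [List.map_cons, angOpChain_cons, angOpChain_iterConv hh hv _ L (hh i)]
  refine angOp_eq_mul_angOp (q := fun t => ε ^ (i :: L).length * χ t)
    ((hv i).iterConv hα L (hh i)) ((hv i).iterConv hβ L (hh i)) hABg hg.continuous.continuousAt
    (by fun_prop) hx ?_
  filter_upwards [iterConv_sub_const_mul_ae hα L (hv i).integrable (hh i).integrable (α i),
    iterConv_sub_const_mul_ae hβ L (hv i).integrable (hh i).integrable (β i)] with t hαt hβt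
  rw [← hαt, ← hβt]
  exact iterConv_eq_mul_iterConv hχ hrel (hrel i) L t

end FirstOrder

end IteratedConvolution

section Factor

lemma intervalIntegrable_sin_rpow {r : ℝ} (hr : -1 < r) :
    IntervalIntegrable (fun x => Real.sin x ^ r) volume 0 (π / 2) := by
  rcases le_total 0 r with hr0 | hr0
  · exact (Real.continuous_sin.rpow_const fun _ => .inr hr0).intervalIntegrable _ _
  have hbound : IntervalIntegrable (fun x => (2 / π) ^ r * x ^ r) volume 0 (π / 2) :=
    (intervalIntegral.intervalIntegrable_rpow' hr).const_mul _
  refine hbound.mono_fun' (Real.measurable_sin.pow_const r).aestronglyMeasurable ?_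
  filter_upwards [ae_restrict_mem measurableSet_uIoc] with x hx
  rw [uIoc_of_le (by positivity)] at hx
  have hsin : 2 / π * x ≤ Real.sin x := Real.mul_le_sin hx.1.le hx.2
  have hpos : 0 < 2 / π * x := mul_pos (by positivity) hx.1
  rw [Real.norm_of_nonneg (Real.rpow_nonneg (hpos.le.trans hsin) r),
    ← Real.mul_rpow (by positivity) hx.1.le]
  exact Real.rpow_le_rpow_of_nonpos hpos hsin hr0

lemma intervalIntegrable_cos_rpow {r : ℝ} (hr : -1 < r) :
    IntervalIntegrable (fun x => Real.cos x ^ r) volume (-(π / 2)) (π / 2) := by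
  have hright : IntervalIntegrable (fun x => Real.cos x ^ r) volume 0 (π / 2) := by
    simpa [Real.sin_pi_div_two_sub] using
      ((intervalIntegrable_sin_rpow hr).comp_sub_left (π / 2)).symm
  have hleft : IntervalIntegrable (fun x => Real.cos x ^ r) volume (-(π / 2)) 0 := by
    simpa using (hright.comp_sub_left 0).symm
  exact hleft.trans hright

lemma cos_pi_mul_pos {φ : ℝ} (hφ : φ ∈ Ioo (-(1 : ℝ) / 2) (1 / 2)) : 0 < Real.cos (π * φ) := by
  have := Real.pi_pos
  exact Real.cos_pos_of_mem_Ioo ⟨by nlinarith [hφ.1], by nlinarith [hφ.2]⟩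

lemma one_add_exp_two_pi_I_mul (φ : ℝ) :
    1 + exp (2 * π * I * φ) = (2 * Real.cos (π * φ) : ℝ) * exp ((π * φ : ℝ) * I) := by
  push_cast
  rw [two_cos, add_mul, ← exp_add, ← exp_add, neg_mul, neg_add_cancel, exp_zero, add_comm]
  ring_nf

lemma norm_one_add_exp_two_pi_I_mul (φ : ℝ) :
    ‖1 + exp (2 * π * I * φ)‖ = |2 * Real.cos (π * φ)| := by
  rw [one_add_exp_two_pi_I_mul, norm_mul, norm_exp_ofReal_mul_I, mul_one, norm_real,
    Real.norm_eq_abs]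

lemma re_one_add_exp_two_pi_I_mul (φ : ℝ) :
    (1 + exp (2 * π * I * φ)).re = 2 * Real.cos (π * φ) ^ 2 := by
  rw [one_add_exp_two_pi_I_mul, re_ofReal_mul, exp_ofReal_mul_I_re]
  ring

variable {α β : ℂ} {φ : ℝ}

lemma hfun_of_mem (hφ : φ ∈ Ioo (-(1 : ℝ) / 2) (1 / 2)) :
    hfun α β φ = exp (2 * π * I * α * φ) * (1 + exp (2 * π * I * φ)) ^ (β - α) /
      Gamma (β - α + 1) :=
  if_pos hφ

lemma hfun_of_notMem (hφ : φ ∉ Ioo (-(1 : ℝ) / 2) (1 / 2)) : hfun α β φ = 0 :=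
  if_neg hφ

lemma hfun_eq_zero_of_notMem_Icc (hφ : φ ∉ Icc (-(1 : ℝ) / 2) (1 / 2)) : hfun α β φ = 0 :=
  hfun_of_notMem fun h => hφ (Ioo_subset_Icc_self h)

lemma hfun_add_one_left (α β : ℂ) (φ : ℝ) :
    hfun (α + 1) β φ = exp (2 * π * I * φ) * hfun α (β - 1) φ := by
  by_cases hφ : φ ∈ Ioo (-(1 : ℝ) / 2) (1 / 2)
  · rw [hfun_of_mem hφ, hfun_of_mem hφ, mul_add_one (2 * π * I : ℂ), add_mul, exp_add,
      sub_right_comm β 1, sub_add_eq_sub_sub]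
    ring
  · rw [hfun_of_notMem hφ, hfun_of_notMem hφ, mul_zero]

lemma one_add_exp_mem_slitPlane (hφ : φ ∈ Ioo (-(1 : ℝ) / 2) (1 / 2)) :
    1 + exp (2 * π * I * φ) ∈ slitPlane := by
  refine .inl ?_
  have := cos_pi_mul_pos hφ
  rw [re_one_add_exp_two_pi_I_mul]
  positivity

lemma hfun_add_one_left_add_hfun_sub_one_right (α β : ℂ) (φ : ℝ) :
    hfun (α + 1) β φ + hfun α (β - 1) φ = (β - α) * hfun α β φ := by
  rw [hfun_add_one_left]
  by_cases hφ : φ ∈ Ioo (-(1 : ℝ) / 2) (1 / 2)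
  · have hz := slitPlane_ne_zero (one_add_exp_mem_slitPlane hφ)
    rw [hfun_of_mem hφ, hfun_of_mem hφ, sub_right_comm β 1, sub_add_cancel, div_eq_mul_inv,
      one_div_Gamma_eq_self_mul_one_div_Gamma_add_one, cpow_sub _ _ hz, cpow_one]
    field_simp
    ring
  · simp [hfun_of_notMem hφ]

lemma hasDerivAt_hfun (α β : ℂ) (hφ : φ ∈ Ioo (-(1 : ℝ) / 2) (1 / 2)) :
    HasDerivAt (hfun α β) (2 * π * I * (α * hfun α β φ + hfun (α + 1) β φ)) φ := by
  have hexp := ((hasDerivAt_id (φ : ℂ)).const_mul (2 * π * I * α)).cexp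
  have hpow := (((hasDerivAt_id (φ : ℂ)).const_mul (2 * π * I)).cexp.const_add 1).cpow_const
    (c := β - α) (one_add_exp_mem_slitPlane hφ)
  have hderiv := ((hexp.mul hpow).div_const (Gamma (β - α + 1))).comp_ofReal
  refine (hderiv.congr_deriv ?_).congr_of_eventuallyEq
    (eventually_of_mem (isOpen_Ioo.mem_nhds hφ) fun _ => hfun_of_mem)
  rw [hfun_add_one_left, hfun_of_mem hφ, hfun_of_mem hφ, sub_right_comm β 1, sub_add_cancel,
    div_eq_mul_inv _ (Gamma (β - α)), one_div_Gamma_eq_self_mul_one_div_Gamma_add_one]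
  simp only [id]
  ring

lemma continuous_hfun (h : 0 < (β - α).re) : Continuous (hfun α β) := by
  have hpow : Continuous fun φ : ℝ => (1 + exp (2 * π * I * φ)) ^ (β - α) := by
    refine continuous_iff_continuousAt.2 fun φ => ?_
    have hre : 0 ≤ (1 + exp (2 * π * I * φ)).re := by
      rw [re_one_add_exp_two_pi_I_mul]
      positivity
    exact (continuousAt_cpow_const_of_re_pos (.inl hre) h).comp (f := fun φ : ℝ =>
      1 + exp (2 * π * I * φ)) (by fun_prop)
  refine continuous_if (fun φ hφ => ?_) (by fun_prop) continuous_const.continuousOn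
  have hcos : Real.cos (π * φ) = 0 := by
    rw [show {φ : ℝ | φ ∈ Ioo (-(1 : ℝ) / 2) (1 / 2)} = Ioo (-(1 : ℝ) / 2) (1 / 2) from rfl,
      frontier_Ioo (by norm_num)] at hφ
    rcases hφ with rfl | rfl
    · rw [neg_div, mul_neg, Real.cos_neg, mul_one_div, Real.cos_pi_div_two]
    · rw [mul_one_div, Real.cos_pi_div_two]
  have hne : β - α ≠ 0 := fun h0 => by simp [h0] at h
  rw [one_add_exp_two_pi_I_mul, hcos]
  simp [hne]

lemma isTame_hfun (h : 0 < (β - α).re) : IsTame (hfun α β) := by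
  have hcont : Continuous (hfun α β) := continuous_hfun h
  have hsupp : HasCompactSupport (hfun α β) :=
    .intro isCompact_Icc fun _ => hfun_eq_zero_of_notMem_Icc
  exact ⟨hcont.integrable_of_hasCompactSupport hsupp, hcont, hsupp.exists_bound_of_continuous hcont⟩

lemma norm_hfun_le (α β : ℂ) (hφ : φ ∈ Ioo (-(1 : ℝ) / 2) (1 / 2)) :
    ‖hfun α β φ‖ ≤ Real.exp (π * |α.im|) * Real.exp (π * |(β - α).im|) * 2 ^ (β - α).re /
      ‖Gamma (β - α + 1)‖ * Real.cos (π * φ) ^ (β - α).re := by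
  set z := 1 + exp (2 * π * I * φ)
  have hcos := cos_pi_mul_pos hφ
  have hexp : ‖exp (2 * π * I * α * φ)‖ ≤ Real.exp (π * |α.im|) := by
    have hφ' : |φ| ≤ 1 / 2 := abs_le.2 ⟨by linarith [hφ.1], hφ.2.le⟩
    rw [norm_exp, Real.exp_le_exp]
    calc (2 * π * I * α * φ).re = 2 * π * (-(α.im * φ)) := by simp; ring
      _ ≤ 2 * π * (|α.im| * (1 / 2)) := by
        gcongr
        exact (neg_le_abs _).trans ((abs_mul _ _).trans_le (by gcongr))
      _ = π * |α.im| := by ring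
  have hpow : ‖z ^ (β - α)‖ ≤
      2 ^ (β - α).re * Real.cos (π * φ) ^ (β - α).re * Real.exp (π * |(β - α).im|) := by
    refine (norm_cpow_le _ _).trans ?_
    rw [norm_one_add_exp_two_pi_I_mul, abs_of_pos (by positivity),
      Real.mul_rpow two_pos.le hcos.le, div_eq_mul_inv, ← Real.exp_neg]
    gcongr
    exact (neg_le_abs _).trans ((abs_mul _ _).trans_le (by gcongr; exact abs_arg_le_pi z))
  rw [hfun_of_mem hφ, norm_div, norm_mul]
  calc _ ≤ Real.exp (π * |α.im|) * (2 ^ (β - α).re * Real.cos (π * φ) ^ (β - α).re *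
        Real.exp (π * |(β - α).im|)) / ‖Gamma (β - α + 1)‖ := by gcongr
    _ = _ := by ring

lemma measurable_hfun (α β : ℂ) : Measurable (hfun α β) :=
  Measurable.ite measurableSet_Ioo (by fun_prop) measurable_const

lemma integrable_hfun (h : -1 < (β - α).re) : Integrable (hfun α β) := by
  have hcos : IntegrableOn (fun φ => Real.cos (π * φ) ^ (β - α).re)
      (Ioo (-(1 : ℝ) / 2) (1 / 2)) := by
    rw [← intervalIntegrable_iff_integrableOn_Ioo_of_le (by norm_num)]
    convert (intervalIntegrable_cos_rpow h).comp_mul_left (c := π) using 1 <;>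
      field_simp
  have hIoo : IntegrableOn (hfun α β) (Ioo (-(1 : ℝ) / 2) (1 / 2)) :=
    (hcos.const_mul _).mono' (measurable_hfun α β).aestronglyMeasurable
      (ae_restrict_of_forall_mem measurableSet_Ioo fun _ => norm_hfun_le α β)
  exact hIoo.integrable_of_forall_notMem_eq_zero fun _ => hfun_of_notMem

lemma hasWeakAngDeriv_hfun (h : 0 < (β - α).re) :
    HasWeakAngDeriv (hfun α β) fun φ => α * hfun α β φ + hfun (α + 1) β φ := by
  have hre : -1 < (β - (α + 1)).re := by
    rw [sub_add_eq_sub_sub, sub_re, one_re]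
    linarith
  have hInt : Integrable fun φ => α * hfun α β φ + hfun (α + 1) β φ :=
    ((isTame_hfun h).integrable.const_mul α).add (integrable_hfun hre)
  refine ⟨hInt, fun a b => ?_⟩
  rw [← intervalIntegral.integral_const_mul]
  refine (integral_eq_of_hasDerivAt_off_countable _ _ (s := {-1 / 2, 1 / 2}) (by simp)
    (continuous_hfun h).continuousOn ?_ (hInt.const_mul _).intervalIntegrable).symm
  rintro φ ⟨-, hφ⟩
  by_cases hmem : φ ∈ Ioo (-(1 : ℝ) / 2) (1 / 2)
  · exact hasDerivAt_hfun α β hmem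
  · have hnotMem : φ ∉ Icc (-(1 : ℝ) / 2) (1 / 2) := by
      rwa [← Set.Icc_sdiff_both, Set.mem_sdiff, not_and_not_right, imp_iff_not hφ] at hmem
    rw [hfun_of_notMem hmem, hfun_of_notMem hmem, mul_zero, add_zero, mul_zero]
    exact (hasDerivAt_const φ (0 : ℂ)).congr_of_eventuallyEq
      (eventually_of_mem (isClosed_Icc.isOpen_compl.mem_nhds hnotMem)
        fun _ => hfun_eq_zero_of_notMem_Icc)

end Factor

lemma neg_one_pow_mul_exp_ne_one {n : ℕ} {k : ℤ} {φ : ℝ}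
    (hφ : φ ∈ Ioo (-(n : ℝ) / 2 + k) (-(n : ℝ) / 2 + k + 1)) :
    (-1 : ℂ) ^ n * exp (2 * π * I * φ) ≠ 1 := by
  intro h
  rw [← exp_pi_mul_I, ← exp_nat_mul, ← exp_add, exp_eq_one_iff] at h
  obtain ⟨m, hm⟩ := h
  have hφm : φ = -(n : ℝ) / 2 + m := by
    have : (φ : ℂ) = -(n : ℂ) / 2 + m := by
      apply mul_right_cancel₀ two_pi_I_ne_zero
      linear_combination hm
    exact_mod_cast this
  have hkm : k < m := by exact_mod_cast (by linarith [hφ.1] : (k : ℝ) < m)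
  have hmk : m < k + 1 := by exact_mod_cast (by linarith [hφ.2] : (m : ℝ) < k + 1)
  omega

theorem convolution_satisfies_hypergeometric_general (n : ℕ) (hn : 1 ≤ n) (α β : Fin n → ℂ)
    (h : ∀ i, 0 < (β i - α i).re)
    (H : ℝ → ℂ) (hH : H = convList (List.ofFn fun i => hfun (α i) (β i)))
    (φ : ℝ) (hφ : (-1 : ℂ) ^ n * exp (2 * π * I * φ) ≠ 1) :
    angOpChain (List.ofFn α) H φ =
      (-1 : ℂ) ^ n * exp (2 * π * I * φ) * angOpChain (List.ofFn β) H φ := by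
  have hχ (x y : ℝ) : exp (2 * π * I * (x + y : ℝ)) =
      exp (2 * π * I * x) * exp (2 * π * I * y) := by
    rw [← exp_add, ofReal_add, mul_add]
  have hrel (i : Fin n) (x : ℝ) :
      α i * hfun (α i) (β i) x + hfun (α i + 1) (β i) x - α i * hfun (α i) (β i) x =
        -1 * exp (2 * π * I * x) *
          (α i * hfun (α i) (β i) x + hfun (α i + 1) (β i) x - β i * hfun (α i) (β i) x) := by
    linear_combination hfun_add_one_left (α i) (β i) x + exp (2 * π * I * x) *
      hfun_add_one_left_add_hfun_sub_one_right (α i) (β i) x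
  have hL : List.finRange n ≠ [] := by simpa using Nat.one_le_iff_ne_zero.1 hn
  have key := angOpChain_convList_eq (fun i => isTame_hfun (h i))
    (fun i => hasWeakAngDeriv_hfun (h i)) hχ (by fun_prop) hrel hL (x := φ)
  rw [hH, List.ofFn_eq_map, List.ofFn_eq_map, List.ofFn_eq_map]
  simpa only [List.length_finRange] using key (by rwa [List.length_finRange])

/-- For `α₁,…,αₙ,β₁,…,βₙ ∈ ℂ` with `Re(βᵢ - αᵢ) > 0`, the `n`-fold
convolution `H = h_{α₁,β₁} ∗ ⋯ ∗ h_{αₙ,βₙ}` satisfies, on each interval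
`(-n/2 + k, -n/2 + k + 1)` (`k = 0,…,n-1`), the hypergeometric differential equation
`(D_φ - α₁)∘⋯∘(D_φ - αₙ) H = (-1)ⁿ e^{2πiφ} (D_φ - β₁)∘⋯∘(D_φ - βₙ) H`,
where `D_φ = (2πi)⁻¹ d/dφ`. -/
theorem convolution_satisfies_hypergeometric (n : ℕ) (hn : 1 ≤ n) (α β : Fin n → ℂ)
    (h : ∀ i, 0 < (β i - α i).re)
    (H : ℝ → ℂ) (hH : H = convList (List.ofFn fun i => hfun (α i) (β i))) :
    ∀ k : ℕ, k < n →
      ∀ φ ∈ Set.Ioo (-(n : ℝ) / 2 + (k : ℝ)) (-(n : ℝ) / 2 + (k : ℝ) + 1),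
        angOpChain (List.ofFn α) H φ =
          (-1 : ℂ) ^ n * Complex.exp (2 * (π : ℂ) * Complex.I * (φ : ℂ)) *
            angOpChain (List.ofFn β) H φ := by
  exact fun _ _ φ hφ => convolution_satisfies_hypergeometric_general n hn α β h H hH φ
    (neg_one_pow_mul_exp_ne_one (by exact_mod_cast hφ))
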